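/- Let Ω ⊆ ℝ³ be open and let α(x) = α₁(x₁)e₁ + α₂(x₂)e₂ + α₃(x₃)e₃ with α₁, α₂, α₃ : ℝ → ℂ continuously differentiable, and set v_k := −Dα^{(k)} − α² (k = 0,1,2,3). Given f = f₀ + f₁e₁ + f₂e₂ + f₃e₃ : Ω → ℍ(ℂ), suppose u₀, u₁, u₂, u₃ : Ω → ℂ are twice differentiable scalar functions satisfying −Δu_k + v_k u_k = f_k on Ω. Then the function T_α f := (D − M^α)u = Du − uα, where u = u₀ + u₁e₁ + u₂e₂ + u₃e₃, satisfies D(T_α f) + (T_α f)·α = f on Ω; i.e. T_α is a right inverse for the operator D_α = D + M^α. -/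

import Mathlib

noncomputable section

abbrev HC := Quaternion ℂ

def e1 : HC := ⟨0, 1, 0, 0⟩
def e2 : HC := ⟨0, 0, 1, 0⟩
def e3 : HC := ⟨0, 0, 0, 1⟩

def pd (k : Fin 3) (g : (Fin 3 → ℝ) → ℂ) (x : Fin 3 → ℝ) : ℂ :=
  fderiv ℝ g x (Pi.single k 1)

def lap (g : (Fin 3 → ℝ) → ℂ) (x : Fin 3 → ℝ) : ℂ :=
  pd 0 (pd 0 g) x + pd 1 (pd 1 g) x + pd 2 (pd 2 g) x

def pdq (k : Fin 3) (f : (Fin 3 → ℝ) → HC) (x : Fin 3 → ℝ) : HC :=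
  ⟨pd k (fun y => (f y).re) x, pd k (fun y => (f y).imI) x,
   pd k (fun y => (f y).imJ) x, pd k (fun y => (f y).imK) x⟩

def Dq (f : (Fin 3 → ℝ) → HC) (x : Fin 3 → ℝ) : HC :=
  e1 * pdq 0 f x + e2 * pdq 1 f x + e3 * pdq 2 f x

def lapq (f : (Fin 3 → ℝ) → HC) (x : Fin 3 → ℝ) : HC :=
  ⟨lap (fun y => (f y).re) x, lap (fun y => (f y).imI) x,
   lap (fun y => (f y).imJ) x, lap (fun y => (f y).imK) x⟩

def QDiffOn (f : (Fin 3 → ℝ) → HC) (Ω : Set (Fin 3 → ℝ)) : Prop :=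
  DifferentiableOn ℝ (fun y => (f y).re) Ω ∧ DifferentiableOn ℝ (fun y => (f y).imI) Ω ∧
  DifferentiableOn ℝ (fun y => (f y).imJ) Ω ∧ DifferentiableOn ℝ (fun y => (f y).imK) Ω

def QC2On (f : (Fin 3 → ℝ) → HC) (Ω : Set (Fin 3 → ℝ)) : Prop :=
  ContDiffOn ℝ 2 (fun y => (f y).re) Ω ∧ ContDiffOn ℝ 2 (fun y => (f y).imI) Ω ∧
  ContDiffOn ℝ 2 (fun y => (f y).imJ) Ω ∧ ContDiffOn ℝ 2 (fun y => (f y).imK) Ω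


/-- Build a biquaternion from its four complex components. -/
def quat (a b c d : ℂ) : HC := ⟨a, b, c, d⟩

/-- The diagonal purely vectorial function `α(x) = α₁(x₁)e₁ + α₂(x₂)e₂ + α₃(x₃)e₃`. -/
def dal (a1 a2 a3 : ℝ → ℂ) (x : Fin 3 → ℝ) : HC :=
  quat 0 (a1 (x 0)) (a2 (x 1)) (a3 (x 2))

/-- `s = α₁² + α₂² + α₃²` (so that `α² = −s`). -/
def sq3 (a1 a2 a3 : ℝ → ℂ) (x : Fin 3 → ℝ) : ℂ :=
  a1 (x 0) ^ 2 + a2 (x 1) ^ 2 + a3 (x 2) ^ 2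

/-- The scalar potentials `v_k = −Dα^{(k)} − α²`, written explicitly. -/
def vpot (a1 a2 a3 : ℝ → ℂ) : Fin 4 → (Fin 3 → ℝ) → ℂ :=
  ![fun x => deriv a1 (x 0) + deriv a2 (x 1) + deriv a3 (x 2) + sq3 a1 a2 a3 x,
    fun x => deriv a1 (x 0) - deriv a2 (x 1) - deriv a3 (x 2) + sq3 a1 a2 a3 x,
    fun x => -deriv a1 (x 0) + deriv a2 (x 1) - deriv a3 (x 2) + sq3 a1 a2 a3 x,
    fun x => -deriv a1 (x 0) - deriv a2 (x 1) + deriv a3 (x 2) + sq3 a1 a2 a3 x]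

/-- The scalar potentials `w_k = Dα^{(k)} − α²`, written explicitly. -/
def wpot (a1 a2 a3 : ℝ → ℂ) : Fin 4 → (Fin 3 → ℝ) → ℂ :=
  ![fun x => -(deriv a1 (x 0) + deriv a2 (x 1) + deriv a3 (x 2)) + sq3 a1 a2 a3 x,
    fun x => -deriv a1 (x 0) + deriv a2 (x 1) + deriv a3 (x 2) + sq3 a1 a2 a3 x,
    fun x => deriv a1 (x 0) - deriv a2 (x 1) + deriv a3 (x 2) + sq3 a1 a2 a3 x,
    fun x => deriv a1 (x 0) + deriv a2 (x 1) - deriv a3 (x 2) + sq3 a1 a2 a3 x]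

/-- The `k`-th complex component of a biquaternion. -/
def qc (k : Fin 4) (q : HC) : ℂ := ![q.re, q.imI, q.imJ, q.imK] k

/-!
Since `D² = -Δ` and `D(uα) = (Du)α + ∑ⱼ eⱼ u ∂ⱼα`, the terms `(Du)α` cancel in
`(D + M^α)(D - M^α)u`, leaving `-Δu - ∑ⱼ eⱼ u ∂ⱼα - uα²`. For diagonal `α` we have
`∂ⱼα = (dαⱼ/dxⱼ) eⱼ`, and `q ↦ eⱼ q eⱼ` only changes the signs of some components of `q`, so the
four components decouple: the `k`-th one is `-Δu_k + v_k u_k`.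
-/

open scoped Quaternion Topology

/-- Componentwise real differentiability of a biquaternion-valued function. Mathlib puts no norm on
`Quaternion ℂ`, so `DifferentiableAt` cannot be used on it directly. -/
def QDiffAt (f : (Fin 3 → ℝ) → HC) (x : Fin 3 → ℝ) : Prop :=
  ∀ i, DifferentiableAt ℝ (fun y => qc i (f y)) x

/-- Twice differentiability at a point, without continuity of the second derivative. -/
def TwiceDifferentiableAt {E F : Type*} [NormedAddCommGroup E] [NormedSpace ℝ E]
    [NormedAddCommGroup F] [NormedSpace ℝ F] (g : E → F) (x : E) : Prop :=
  (∀ᶠ y in 𝓝 x, DifferentiableAt ℝ g y) ∧ DifferentiableAt ℝ (fderiv ℝ g) x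

/-- Componentwise twice differentiability of a biquaternion-valued function, the regularity needed
for `D² = -Δ`. -/
def QTwiceDiffAt (f : (Fin 3 → ℝ) → HC) (x : Fin 3 → ℝ) : Prop :=
  ∀ i, TwiceDifferentiableAt (fun y => qc i (f y)) x

@[simp] theorem re_quat (a b c d : ℂ) : (quat a b c d).re = a := rfl
@[simp] theorem imI_quat (a b c d : ℂ) : (quat a b c d).imI = b := rfl
@[simp] theorem imJ_quat (a b c d : ℂ) : (quat a b c d).imJ = c := rfl
@[simp] theorem imK_quat (a b c d : ℂ) : (quat a b c d).imK = d := rfl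

theorem e1_eq_quat : e1 = quat 0 1 0 0 := rfl
theorem e2_eq_quat : e2 = quat 0 0 1 0 := rfl
theorem e3_eq_quat : e3 = quat 0 0 0 1 := rfl

theorem qc_ext {p q : HC} (h : ∀ i, qc i p = qc i q) : p = q :=
  Quaternion.ext _ _ (h 0) (h 1) (h 2) (h 3)

theorem qc_add (i : Fin 4) (p q : HC) : qc i (p + q) = qc i p + qc i q := by
  fin_cases i <;> rfl

theorem qc_sub (i : Fin 4) (p q : HC) : qc i (p - q) = qc i p - qc i q := by
  fin_cases i <;> rfl

theorem qc_neg (i : Fin 4) (q : HC) : qc i (-q) = -qc i q := by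
  fin_cases i <;> rfl

theorem qc_pdq (i : Fin 4) (k : Fin 3) (f : (Fin 3 → ℝ) → HC) (x : Fin 3 → ℝ) :
    qc i (pdq k f x) = pd k (fun y => qc i (f y)) x := by
  fin_cases i <;> rfl

theorem qc_lapq (i : Fin 4) (f : (Fin 3 → ℝ) → HC) (x : Fin 3 → ℝ) :
    qc i (lapq f x) = lap (fun y => qc i (f y)) x := by
  fin_cases i <;> rfl

theorem e1_mul_e1 : e1 * e1 = -1 := by
  ext <;> simp [e1_eq_quat]

theorem e2_mul_e2 : e2 * e2 = -1 := by
  ext <;> simp [e2_eq_quat]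

theorem e3_mul_e3 : e3 * e3 = -1 := by
  ext <;> simp [e3_eq_quat]

theorem e2_mul_e1 : e2 * e1 = -(e1 * e2) := by
  ext <;> simp [e1_eq_quat, e2_eq_quat]

theorem e3_mul_e1 : e3 * e1 = -(e1 * e3) := by
  ext <;> simp [e1_eq_quat, e3_eq_quat]

theorem e3_mul_e2 : e3 * e2 = -(e2 * e3) := by
  ext <;> simp [e2_eq_quat, e3_eq_quat]

theorem e1_mul_mul_quat (q : HC) (d : ℂ) : e1 * q * quat 0 d 0 0 =
    quat (-(d * q.re)) (-(d * q.imI)) (d * q.imJ) (d * q.imK) := by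
  ext <;> simp [e1_eq_quat, mul_comm]

theorem e2_mul_mul_quat (q : HC) (d : ℂ) : e2 * q * quat 0 0 d 0 =
    quat (-(d * q.re)) (d * q.imI) (-(d * q.imJ)) (d * q.imK) := by
  ext <;> simp [e2_eq_quat, mul_comm]

theorem e3_mul_mul_quat (q : HC) (d : ℂ) : e3 * q * quat 0 0 0 d =
    quat (-(d * q.re)) (d * q.imI) (d * q.imJ) (-(d * q.imK)) := by
  ext <;> simp [e3_eq_quat, mul_comm]

theorem sum_mul_sum_mul_eq_neg_of_anticommute {R : Type*} [Ring R] {i j k : R} (hii : i * i = -1)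
    (hjj : j * j = -1) (hkk : k * k = -1) (hji : j * i = -(i * j)) (hki : k * i = -(i * k))
    (hkj : k * j = -(j * k)) (a b c p q r : R) :
    i * (i * a + j * p + k * q) + j * (i * p + j * b + k * r) + k * (i * q + j * r + k * c) =
      -(a + b + c) := by
  simp only [mul_add, ← mul_assoc, hii, hjj, hkk, hji, hki, hkj, neg_mul, one_mul]
  abel

theorem twiceDifferentiableAt_of_contDiffAt {E F : Type*} [NormedAddCommGroup E] [NormedSpace ℝ E]
    [NormedAddCommGroup F] [NormedSpace ℝ F] {g : E → F} {x : E} (hg : ContDiffAt ℝ 2 g x) :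
    TwiceDifferentiableAt g x :=
  ⟨(hg.eventually (by simp)).mono fun _ hy => hy.differentiableAt two_ne_zero,
    (hg.fderiv_right (m := 1) (by norm_num)).differentiableAt one_ne_zero⟩

section ScalarPartialDerivatives

variable {f g : (Fin 3 → ℝ) → ℂ} {x : Fin 3 → ℝ}

theorem pd_const (k : Fin 3) (c : ℂ) (x : Fin 3 → ℝ) : pd k (fun _ => c) x = 0 := by
  simp [pd]

theorem pd_add (k : Fin 3) (hf : DifferentiableAt ℝ f x) (hg : DifferentiableAt ℝ g x) :
    pd k (fun y => f y + g y) x = pd k f x + pd k g x := by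
  simp [pd, fderiv_fun_add hf hg]

theorem pd_sub (k : Fin 3) (hf : DifferentiableAt ℝ f x) (hg : DifferentiableAt ℝ g x) :
    pd k (fun y => f y - g y) x = pd k f x - pd k g x := by
  simp [pd, fderiv_fun_sub hf hg]

theorem pd_mul (k : Fin 3) (hf : DifferentiableAt ℝ f x) (hg : DifferentiableAt ℝ g x) :
    pd k (fun y => f y * g y) x = pd k f x * g x + f x * pd k g x := by
  simp [pd, fderiv_fun_mul hf hg, mul_comm, add_comm]

theorem pd_comp_apply (k j : Fin 3) {a : ℝ → ℂ} (ha : DifferentiableAt ℝ a (x j)) :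
    pd k (fun y => a (y j)) x = if j = k then deriv a (x j) else 0 := by
  have hchain : HasFDerivAt (fun y : Fin 3 → ℝ => a (y j)) _ x :=
    ha.hasDerivAt.hasFDerivAt.comp x (hasFDerivAt_apply j x)
  rw [pd, hchain.fderiv]
  simp [Pi.single_apply]

theorem pd_pd_eq_fderiv_fderiv (hg : DifferentiableAt ℝ (fderiv ℝ g) x) (j k : Fin 3) :
    pd j (pd k g) x = fderiv ℝ (fderiv ℝ g) x (Pi.single j 1) (Pi.single k 1) := by
  unfold pd
  simp [fderiv_clm_apply hg (differentiableAt_const _)]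

theorem pd_comm (hg : TwiceDifferentiableAt g x) (j k : Fin 3) :
    pd j (pd k g) x = pd k (pd j g) x := by
  rw [pd_pd_eq_fderiv_fderiv hg.2, pd_pd_eq_fderiv_fderiv hg.2]
  exact second_derivative_symmetric_of_eventually
    (hg.1.mono fun _ hy => hy.hasFDerivAt) hg.2.hasFDerivAt _ _

end ScalarPartialDerivatives

section QuaternionicPartialDerivatives

variable {f g : (Fin 3 → ℝ) → HC} {x : Fin 3 → ℝ}

theorem qDiffAt_iff : QDiffAt f x ↔
    DifferentiableAt ℝ (fun y => (f y).re) x ∧ DifferentiableAt ℝ (fun y => (f y).imI) x ∧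
    DifferentiableAt ℝ (fun y => (f y).imJ) x ∧ DifferentiableAt ℝ (fun y => (f y).imK) x := by
  simp [QDiffAt, Fin.forall_fin_succ, qc]

theorem QDiffAt.const (q : HC) (x : Fin 3 → ℝ) : QDiffAt (fun _ => q) x :=
  fun _ => differentiableAt_const _

theorem QDiffAt.add (hf : QDiffAt f x) (hg : QDiffAt g x) : QDiffAt (fun y => f y + g y) x := by
  simpa only [QDiffAt, qc_add] using fun i => (hf i).fun_add (hg i)

theorem QDiffAt.mul (hf : QDiffAt f x) (hg : QDiffAt g x) : QDiffAt (fun y => f y * g y) x := by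
  obtain ⟨hf0, hf1, hf2, hf3⟩ := qDiffAt_iff.1 hf
  obtain ⟨hg0, hg1, hg2, hg3⟩ := qDiffAt_iff.1 hg
  simp only [qDiffAt_iff, Quaternion.re_mul, Quaternion.imI_mul, Quaternion.imJ_mul,
    Quaternion.imK_mul]
  refine ⟨?_, ?_, ?_, ?_⟩ <;> fun_prop

theorem pdq_eq_quat (k : Fin 3) (f : (Fin 3 → ℝ) → HC) (x : Fin 3 → ℝ) :
    pdq k f x = quat (pd k (fun y => (f y).re) x) (pd k (fun y => (f y).imI) x)
      (pd k (fun y => (f y).imJ) x) (pd k (fun y => (f y).imK) x) :=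
  rfl

theorem pdq_const (k : Fin 3) (q : HC) (x : Fin 3 → ℝ) : pdq k (fun _ => q) x = 0 :=
  Quaternion.ext _ _ (pd_const k _ x) (pd_const k _ x) (pd_const k _ x) (pd_const k _ x)

theorem pdq_add (k : Fin 3) (hf : QDiffAt f x) (hg : QDiffAt g x) :
    pdq k (fun y => f y + g y) x = pdq k f x + pdq k g x :=
  qc_ext fun i => by simp only [qc_pdq, qc_add, pd_add k (hf i) (hg i)]

theorem pdq_sub (k : Fin 3) (hf : QDiffAt f x) (hg : QDiffAt g x) :
    pdq k (fun y => f y - g y) x = pdq k f x - pdq k g x :=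
  qc_ext fun i => by simp only [qc_pdq, qc_sub, pd_sub k (hf i) (hg i)]

theorem pdq_mul (k : Fin 3) (hf : QDiffAt f x) (hg : QDiffAt g x) :
    pdq k (fun y => f y * g y) x = pdq k f x * g x + f x * pdq k g x := by
  obtain ⟨hf0, hf1, hf2, hf3⟩ := qDiffAt_iff.1 hf
  obtain ⟨hg0, hg1, hg2, hg3⟩ := qDiffAt_iff.1 hg
  ext <;>
  · simp (disch := fun_prop) only [pdq_eq_quat, re_quat, imI_quat, imJ_quat, imK_quat,
      Quaternion.re_add, Quaternion.imI_add, Quaternion.imJ_add, Quaternion.imK_add,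
      Quaternion.re_mul, Quaternion.imI_mul, Quaternion.imJ_mul, Quaternion.imK_mul,
      pd_add, pd_sub, pd_mul]
    ring

theorem pdq_const_mul (k : Fin 3) (q : HC) (hf : QDiffAt f x) :
    pdq k (fun y => q * f y) x = q * pdq k f x := by
  rw [pdq_mul k (.const q x) hf, pdq_const, zero_mul, zero_add]

theorem QTwiceDiffAt.qDiffAt (hf : QTwiceDiffAt f x) : QDiffAt f x :=
  fun i => (hf i).1.self_of_nhds

theorem QTwiceDiffAt.qDiffAt_pdq (hf : QTwiceDiffAt f x) (k : Fin 3) : QDiffAt (pdq k f) x := by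
  intro i
  simp only [qc_pdq]
  exact (hf i).2.clm_apply (differentiableAt_const _)

theorem QC2On.qTwiceDiffAt {Ω : Set (Fin 3 → ℝ)} (hf : QC2On f Ω) (hΩ : Ω ∈ 𝓝 x) :
    QTwiceDiffAt f x := by
  obtain ⟨hf0, hf1, hf2, hf3⟩ := hf
  intro i
  apply twiceDifferentiableAt_of_contDiffAt
  fin_cases i
  exacts [hf0.contDiffAt hΩ, hf1.contDiffAt hΩ, hf2.contDiffAt hΩ, hf3.contDiffAt hΩ]

theorem pdq_comm (hf : QTwiceDiffAt f x) (j k : Fin 3) :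
    pdq j (pdq k f) x = pdq k (pdq j f) x :=
  qc_ext fun i => by simpa only [qc_pdq] using pd_comm (hf i) j k

theorem lapq_eq_sum_pdq_pdq (f : (Fin 3 → ℝ) → HC) (x : Fin 3 → ℝ) :
    lapq f x = pdq 0 (pdq 0 f) x + pdq 1 (pdq 1 f) x + pdq 2 (pdq 2 f) x :=
  rfl

end QuaternionicPartialDerivatives

section DiracOperator

variable {f g u α : (Fin 3 → ℝ) → HC} {x : Fin 3 → ℝ}

theorem QTwiceDiffAt.qDiffAt_Dq (hf : QTwiceDiffAt f x) : QDiffAt (Dq f) x :=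
  (((QDiffAt.const e1 x).mul (hf.qDiffAt_pdq 0)).add
    ((QDiffAt.const e2 x).mul (hf.qDiffAt_pdq 1))).add
    ((QDiffAt.const e3 x).mul (hf.qDiffAt_pdq 2))

theorem Dq_sub (hf : QDiffAt f x) (hg : QDiffAt g x) :
    Dq (fun y => f y - g y) x = Dq f x - Dq g x := by
  simp only [Dq, pdq_sub _ hf hg, mul_sub]
  abel

theorem Dq_mul (hf : QDiffAt f x) (hg : QDiffAt g x) :
    Dq (fun y => f y * g y) x = Dq f x * g x +
      (e1 * f x * pdq 0 g x + e2 * f x * pdq 1 g x + e3 * f x * pdq 2 g x) := by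
  simp only [Dq, pdq_mul _ hf hg, mul_add, add_mul, mul_assoc]
  abel

theorem pdq_Dq (k : Fin 3) (hf : QTwiceDiffAt f x) :
    pdq k (Dq f) x =
      e1 * pdq k (pdq 0 f) x + e2 * pdq k (pdq 1 f) x + e3 * pdq k (pdq 2 f) x := by
  have hdiff (j : Fin 3) (q : HC) : QDiffAt (fun y => q * pdq j f y) x :=
    (QDiffAt.const q x).mul (hf.qDiffAt_pdq j)
  unfold Dq
  rw [pdq_add k ((hdiff 0 e1).add (hdiff 1 e2)) (hdiff 2 e3), pdq_add k (hdiff 0 e1) (hdiff 1 e2),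
    pdq_const_mul k e1 (hf.qDiffAt_pdq 0), pdq_const_mul k e2 (hf.qDiffAt_pdq 1),
    pdq_const_mul k e3 (hf.qDiffAt_pdq 2)]

theorem Dq_Dq (hf : QTwiceDiffAt f x) : Dq (Dq f) x = -lapq f x := by
  rw [Dq, pdq_Dq 0 hf, pdq_Dq 1 hf, pdq_Dq 2 hf, lapq_eq_sum_pdq_pdq, pdq_comm hf 1 0,
    pdq_comm hf 2 0, pdq_comm hf 2 1]
  exact sum_mul_sum_mul_eq_neg_of_anticommute e1_mul_e1 e2_mul_e2 e3_mul_e3 e2_mul_e1 e3_mul_e1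
    e3_mul_e2 _ _ _ _ _ _

theorem Dq_add_mul_Dq_sub_mul (hu : QTwiceDiffAt u x) (hα : QDiffAt α x) :
    Dq (fun y => Dq u y - u y * α y) x + (Dq u x - u x * α x) * α x =
      -lapq u x - (e1 * u x * pdq 0 α x + e2 * u x * pdq 1 α x + e3 * u x * pdq 2 α x) -
        u x * (α x * α x) := by
  rw [Dq_sub hu.qDiffAt_Dq (hu.qDiffAt.mul hα), Dq_Dq hu, Dq_mul hu.qDiffAt hα, sub_mul,
    mul_assoc (u x)]
  abel

end DiracOperator

section DiagonalPotential

variable {a1 a2 a3 : ℝ → ℂ} {x : Fin 3 → ℝ}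

theorem dal_mul_dal (a1 a2 a3 : ℝ → ℂ) (x : Fin 3 → ℝ) :
    dal a1 a2 a3 x * dal a1 a2 a3 x = quat (-sq3 a1 a2 a3 x) 0 0 0 := by
  ext <;> simp only [dal, sq3, Quaternion.re_mul, Quaternion.imI_mul, Quaternion.imJ_mul,
    Quaternion.imK_mul, re_quat, imI_quat, imJ_quat, imK_quat] <;> ring

theorem qDiffAt_dal (ha1 : DifferentiableAt ℝ a1 (x 0)) (ha2 : DifferentiableAt ℝ a2 (x 1))
    (ha3 : DifferentiableAt ℝ a3 (x 2)) : QDiffAt (dal a1 a2 a3) x := by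
  rw [qDiffAt_iff]
  simp only [dal, re_quat, imI_quat, imJ_quat, imK_quat]
  refine ⟨?_, ?_, ?_, ?_⟩ <;> fun_prop

theorem pdq_dal (k : Fin 3) (ha1 : DifferentiableAt ℝ a1 (x 0))
    (ha2 : DifferentiableAt ℝ a2 (x 1)) (ha3 : DifferentiableAt ℝ a3 (x 2)) :
    pdq k (dal a1 a2 a3) x =
      quat 0 (if 0 = k then deriv a1 (x 0) else 0) (if 1 = k then deriv a2 (x 1) else 0)
        (if 2 = k then deriv a3 (x 2) else 0) :=
  Quaternion.ext _ _ (pd_const k 0 x) (pd_comp_apply k 0 ha1) (pd_comp_apply k 1 ha2)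
    (pd_comp_apply k 2 ha3)

theorem qc_sum_e_mul_mul_pdq_dal (q : HC) (ha1 : DifferentiableAt ℝ a1 (x 0))
    (ha2 : DifferentiableAt ℝ a2 (x 1)) (ha3 : DifferentiableAt ℝ a3 (x 2)) (i : Fin 4) :
    qc i (e1 * q * pdq 0 (dal a1 a2 a3) x + e2 * q * pdq 1 (dal a1 a2 a3) x +
      e3 * q * pdq 2 (dal a1 a2 a3) x) =
      (sq3 a1 a2 a3 x - vpot a1 a2 a3 i x) * qc i q := by
  simp only [pdq_dal _ ha1 ha2 ha3, Fin.reduceEq, ↓reduceIte, e1_mul_mul_quat, e2_mul_mul_quat,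
    e3_mul_mul_quat, qc_add]
  fin_cases i <;>
  · simp only [qc, vpot, Fin.zero_eta, Fin.mk_one, Fin.reduceFinMk, Matrix.cons_val, re_quat,
      imI_quat, imJ_quat, imK_quat]
    ring

theorem qc_Dq_add_mul_Dq_sub_mul_dal {u : (Fin 3 → ℝ) → HC} (hu : QTwiceDiffAt u x)
    (ha1 : DifferentiableAt ℝ a1 (x 0)) (ha2 : DifferentiableAt ℝ a2 (x 1))
    (ha3 : DifferentiableAt ℝ a3 (x 2)) (i : Fin 4) :
    qc i (Dq (fun y => Dq u y - u y * dal a1 a2 a3 y) x +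
      (Dq u x - u x * dal a1 a2 a3 x) * dal a1 a2 a3 x) =
      -lap (fun y => qc i (u y)) x + vpot a1 a2 a3 i x * qc i (u x) := by
  have hsq : qc i (u x * quat (-sq3 a1 a2 a3 x) 0 0 0) = -sq3 a1 a2 a3 x * qc i (u x) := by
    fin_cases i <;> simp [qc, mul_comm]
  rw [Dq_add_mul_Dq_sub_mul hu (qDiffAt_dal ha1 ha2 ha3), dal_mul_dal, qc_sub, qc_sub,
    qc_sum_e_mul_mul_pdq_dal (u x) ha1 ha2 ha3, hsq, qc_neg, qc_lapq]
  ring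

end DiagonalPotential

theorem right_inverse_of_D_alpha_general {Ω : Set (Fin 3 → ℝ)} {a1 a2 a3 : ℝ → ℂ}
    (ha1 : Differentiable ℝ a1) (ha2 : Differentiable ℝ a2) (ha3 : Differentiable ℝ a3)
    {f u : (Fin 3 → ℝ) → HC} (hu : ∀ x ∈ Ω, QTwiceDiffAt u x)
    (heq : ∀ i, ∀ x ∈ Ω,
      -lap (fun y => qc i (u y)) x + vpot a1 a2 a3 i x * qc i (u x) = qc i (f x)) :
    ∀ x ∈ Ω, Dq (fun y => Dq u y - u y * dal a1 a2 a3 y) x +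
      (Dq u x - u x * dal a1 a2 a3 x) * dal a1 a2 a3 x = f x :=
  fun x hx => qc_ext fun i =>
    (qc_Dq_add_mul_Dq_sub_mul_dal (hu x hx) (ha1 _) (ha2 _) (ha3 _) i).trans (heq i x hx)

/-- final Proposition of Subsection 4.1: if `u_k` solve the
inhomogeneous Schrödinger equations `−Δu_k + v_k u_k = f_k`, then `T_α f := (D − M^α)u`
satisfies `D(T_α f) + (T_α f)·α = f`, i.e. `T_α` is a right inverse of `D_α = D + M^α`. -/
theorem right_inverse_of_D_alpha
    (Ω : Set (Fin 3 → ℝ)) (hΩ : IsOpen Ω)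
    (a1 a2 a3 : ℝ → ℂ)
    (ha1 : ContDiff ℝ 1 a1) (ha2 : ContDiff ℝ 1 a2) (ha3 : ContDiff ℝ 1 a3)
    (f0 f1 f2 f3 : (Fin 3 → ℝ) → ℂ)
    (u0 u1 u2 u3 : (Fin 3 → ℝ) → ℂ)
    (hu0 : ContDiffOn ℝ 2 u0 Ω) (hu1 : ContDiffOn ℝ 2 u1 Ω)
    (hu2 : ContDiffOn ℝ 2 u2 Ω) (hu3 : ContDiffOn ℝ 2 u3 Ω)
    (heq0 : ∀ x ∈ Ω, -lap u0 x + vpot a1 a2 a3 0 x * u0 x = f0 x)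
    (heq1 : ∀ x ∈ Ω, -lap u1 x + vpot a1 a2 a3 1 x * u1 x = f1 x)
    (heq2 : ∀ x ∈ Ω, -lap u2 x + vpot a1 a2 a3 2 x * u2 x = f2 x)
    (heq3 : ∀ x ∈ Ω, -lap u3 x + vpot a1 a2 a3 3 x * u3 x = f3 x) :
    (let u : (Fin 3 → ℝ) → HC := fun y => quat (u0 y) (u1 y) (u2 y) (u3 y)
     let Tf : (Fin 3 → ℝ) → HC := fun y => Dq u y - u y * dal a1 a2 a3 y
     ∀ x ∈ Ω, Dq Tf x + Tf x * dal a1 a2 a3 x = quat (f0 x) (f1 x) (f2 x) (f3 x)) := by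
  refine right_inverse_of_D_alpha_general (f := fun y => quat (f0 y) (f1 y) (f2 y) (f3 y))
    (ha1.differentiable one_ne_zero) (ha2.differentiable one_ne_zero)
    (ha3.differentiable one_ne_zero)
    (fun x hx => QC2On.qTwiceDiffAt ⟨hu0, hu1, hu2, hu3⟩ (hΩ.mem_nhds hx)) (fun i => ?_)
  fin_cases i
  exacts [heq0, heq1, heq2, heq3]
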